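/- Let X be a length space, let Y be a nonempty subset of X, and let F : Y → ℝ be a bounded Lipschitz function. Then there exists exactly one absolutely minimal (AM) extension u : X → ℝ of F. -/

import Mathlib

open Metric Set

noncomputable section

/-- The length of a continuous path: its total variation. -/
def pathLength {X : Type*} [MetricSpace X] {x y : X} (γ : Path x y) : ENNReal :=
  eVariationOn (fun t => γ t) (Set.univ : Set unitInterval)

/-- A metric space is a length space if the distance between any two points equals the
infimum of the lengths of continuous paths joining them. -/
def IsLengthSpace (X : Type*) [MetricSpace X] : Prop :=
  ∀ x y : X, edist x y = ⨅ γ : Path x y, pathLength γ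

/-- The (possibly infinite) Lipschitz constant of `u` on `S`:
`Lip_S u = sup {|u x - u y| / d(x,y) : x, y ∈ S, x ≠ y}`. -/
def lipOn {X : Type*} [MetricSpace X] (u : X → ℝ) (S : Set X) : ENNReal :=
  ⨆ (x : X) (_ : x ∈ S) (y : X) (_ : y ∈ S) (_ : x ≠ y),
    ENNReal.ofReal (|u x - u y| / dist x y)

/-- `u : X → ℝ` is an absolutely minimal (AM) extension of `F` prescribed on `Y`:
`u` is Lipschitz, `u = F` on `Y`, and `Lip_U u = Lip_{∂U} u` for every open `U ⊆ X \ Y`. -/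
def IsAMExtension {X : Type*} [MetricSpace X] (Y : Set X) (F u : X → ℝ) : Prop :=
  lipOn u Set.univ < ⊤ ∧ Set.EqOn u F Y ∧
    ∀ U : Set X, IsOpen U → U ⊆ Yᶜ → lipOn u U = lipOn u (frontier U)

/-!
Off `Y`, being absolutely minimal amounts to comparison with cones from above and from below. For
Lipschitz `F`, the greatest function with the Lipschitz constant and the bound `F` on `Y` that
satisfies comparison from above also satisfies it from below, since otherwise it could be raised to
a cone; this gives existence.

For uniqueness, let `u` and `-v` satisfy comparison with cones from above. Replacing each by its
supremum over closed `ε`-balls changes it little and makes it discretely infinity-subharmonic. Two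
such discrete subsolutions with sum `≤ β` on the boundary set have sum `≤ β` everywhere. If one of
them has slope at least `δ > 0` off that set, then, starting where the sum is nearly maximal, one
can climb along it forever, which contradicts boundedness. A general subsolution is first
replaced by a smaller one that has such a slope and takes the same value at a given point where
the slope is positive.
-/

open scoped NNReal

section DiscreteComparison

variable {X : Type*} [PseudoMetricSpace X] {u v : X → ℝ} {S A : Set X} {x y : X}
  {ε δ η c m β : ℝ}

/-- The supremum of `u` over the closed ball of radius `ε`, as a function of the centre. It is
meaningful only where `u` is bounded above on that ball, the real `sSup` being `0` otherwise. -/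
def supBall (ε : ℝ) (u : X → ℝ) (x : X) : ℝ :=
  sSup (u '' closedBall x ε)

lemma le_supBall (hu : BddAbove (range u)) (hy : dist y x ≤ ε) : u y ≤ supBall ε u x :=
  le_csSup (hu.mono (image_subset_range u _)) (mem_image_of_mem u hy)

lemma supBall_le (hε : 0 ≤ ε) (h : ∀ y, dist y x ≤ ε → u y ≤ c) : supBall ε u x ≤ c :=
  csSup_le ((nonempty_closedBall.2 hε).image u) (forall_mem_image.2 h)

lemma exists_lt_of_lt_supBall (hε : 0 ≤ ε) (h : c < supBall ε u x) :
    ∃ y, dist y x ≤ ε ∧ c < u y := by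
  simpa only [exists_mem_image, mem_closedBall] using
    exists_lt_of_lt_csSup ((nonempty_closedBall.2 hε).image u) h

lemma bddAbove_range_supBall (hε : 0 ≤ ε) (hu : BddAbove (range u)) :
    BddAbove (range (supBall ε u)) := by
  obtain ⟨M, hM⟩ := hu
  exact ⟨M, forall_mem_range.2 fun _ ↦ supBall_le hε fun y _ ↦ hM (mem_range_self y)⟩

lemma supBall_le_add_of_dist_lt (hε : 0 ≤ ε)
    (hδ : ∀ ⦃p q⦄, dist p q < δ → dist (u p) (u q) < η) (hεδ : ε + dist x y < δ) :
    supBall ε u x ≤ u y + η := by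
  refine supBall_le hε fun p hp ↦ ?_
  have h : |u p - u y| < η := hδ ((dist_triangle p x y).trans_lt (by linarith))
  linarith [le_abs_self (u p - u y)]

/-- Discrete infinity-subharmonicity of `f` at `x` on the scale `ε`: the increase
`sup f - f x` over the closed `ε`-ball is at least the decrease `f x - inf f`. The infimum is
expressed by a quantifier, so that only boundedness from above is relevant. -/
def IsDiscreteSubAt (ε : ℝ) (f : X → ℝ) (x : X) : Prop :=
  ∀ y, dist y x ≤ ε → 2 * f x ≤ supBall ε f x + f y

lemma forall_of_forall_dist_le [PreconnectedSpace X] {p : X → Prop} (hε : 0 < ε) (hp : ∃ x, p x)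
    (hstep : ∀ x y, dist y x ≤ ε → p y → p x) (x : X) : p x := by
  have hopen : IsOpen {x | p x} :=
    isOpen_iff.2 fun y hy ↦ ⟨ε, hε, fun x hx ↦ hstep x y (mem_ball'.1 hx).le hy⟩
  have hopen_compl : IsOpen {x | p x}ᶜ :=
    isOpen_iff.2 fun y hy ↦ ⟨ε, hε, fun x hx hpx ↦ hy (hstep y x (mem_ball.1 hx).le hpx)⟩
  exact eq_univ_iff_forall.1 (IsClopen.eq_univ ⟨⟨hopen_compl⟩, hopen⟩ hp) x

lemma IsDiscreteSubAt.exists_near_sup_add (hε : 0 ≤ ε) (hu : IsDiscreteSubAt ε u x)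
    (hv : IsDiscreteSubAt ε v x) (hm : ∀ y, u y + v y ≤ m) (hη : 0 < η)
    (hx : m - η < u x + v x) :
    ∃ y, supBall ε u x - η < u y ∧ m - 4 * η < u y + v y := by
  obtain ⟨y, hyx, hy⟩ := exists_lt_of_lt_supBall hε (sub_lt_self (supBall ε u x) hη)
  obtain ⟨z, hzx, hz⟩ := exists_lt_of_lt_supBall hε (sub_lt_self (supBall ε v x) hη)
  exact ⟨y, hy, by linarith [hu z hzx, hv y hyx, hm z]⟩

-- Starting near the supremum of `u + v`, one can walk so that `u` gains `δ / 2` at each step while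
-- `u + v` stays near its supremum: if that supremum exceeded `β`, then `u` would be unbounded.
lemma add_le_of_add_le_supBall (hε : 0 ≤ ε) (hδ : 0 < δ) (hub : BddAbove (range u))
    (hvb : BddAbove (range v)) (hS : ∀ x ∈ S, u x + v x ≤ β)
    (hu : ∀ x ∉ S, IsDiscreteSubAt ε u x) (hslope : ∀ x ∉ S, u x + δ ≤ supBall ε u x)
    (hv : ∀ x ∉ S, IsDiscreteSubAt ε v x) (x : X) : u x + v x ≤ β := by
  by_contra! hx
  obtain ⟨M, hM⟩ := hub
  obtain ⟨N, hN⟩ := hvb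
  simp only [mem_upperBounds, forall_mem_range] at hM hN
  set m := ⨆ y, u y + v y
  have hm (y : X) : u y + v y ≤ m :=
    le_ciSup (f := fun y ↦ u y + v y)
      ⟨M + N, forall_mem_range.2 fun y ↦ add_le_add (hM y) (hN y)⟩ y
  have hβm : β < m := hx.trans_le (hm x)
  have : Nonempty X := ⟨x⟩
  have climb (n : ℕ) : ∀ η > 0, ∃ y, m - η < u y + v y ∧ β - N + n * (δ / 2) ≤ u y := by
    induction n with
    | zero =>
      intro η hη
      have hlt : max (m - η) β < m := max_lt (sub_lt_self m hη) hβm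
      obtain ⟨y, hy⟩ := exists_lt_of_lt_ciSup hlt
      obtain ⟨hηy, hβy⟩ := max_lt_iff.1 hy
      exact ⟨y, hηy, by push_cast; linarith [hN y]⟩
    | succ n ih =>
      intro η hη
      obtain ⟨θ, hθ, hθη⟩ : ∃ θ > 0, θ ≤ η / 4 ∧ θ ≤ m - β ∧ θ ≤ δ / 2 :=
        ⟨min (η / 4) (min (m - β) (δ / 2)),
          lt_min (by linarith) (lt_min (by linarith) (by linarith)), by simp⟩
      obtain ⟨y, hym, hyu⟩ := ih θ hθ
      have hyS : y ∉ S := fun hyS ↦ by linarith [hS y hyS]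
      obtain ⟨z, hzu, hzm⟩ := (hu y hyS).exists_near_sup_add hε (hv y hyS) hm hθ hym
      exact ⟨z, by linarith, by push_cast; linarith [hslope y hyS]⟩
  obtain ⟨n, hn⟩ := exists_nat_gt ((M - (β - N)) / (δ / 2))
  rw [div_lt_iff₀ (by linarith)] at hn
  obtain ⟨y, -, hy⟩ := climb n 1 one_pos
  linarith [hM y]

/-- The functions that dominate `u` on `A` and drop by at most `δ` along each `ε`-step to a point
outside `A`. The least of them is used to raise the slope of a subsolution to `δ`. -/
def boundedDropMajorants (ε δ : ℝ) (A : Set X) (u : X → ℝ) : Set (X → ℝ) :=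
  {f | (∀ x ∈ A, u x ≤ f x) ∧ ∀ x ∉ A, ∀ y, dist y x ≤ ε → f y ≤ f x + δ}

-- Chains of `ε`-steps starting in `A` show that the pointwise infimum is finite.
lemma exists_isLeast_boundedDropMajorants [PreconnectedSpace X] (hε : 0 < ε) (hA : A.Nonempty)
    (hu : u ∈ boundedDropMajorants ε δ A u) : ∃ w, IsLeast (boundedDropMajorants ε δ A u) w := by
  have hbdd_of_mem (x : X) (hx : x ∈ A) :
      BddBelow (Function.eval x '' boundedDropMajorants ε δ A u) :=
    ⟨u x, forall_mem_image.2 fun f hf ↦ hf.1 x hx⟩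
  have hbdd : BddBelow (boundedDropMajorants ε δ A u) := by
    refine bddBelow_pi.2 (forall_of_forall_dist_le hε (hA.imp hbdd_of_mem) ?_)
    rintro x y hyx ⟨c, hc⟩
    by_cases hx : x ∈ A
    · exact hbdd_of_mem x hx
    · exact ⟨c - δ, forall_mem_image.2 fun f hf ↦
        sub_le_iff_le_add.2 ((hc (mem_image_of_mem _ hf)).trans (hf.2 x hx y hyx))⟩
  obtain ⟨w, hw⟩ : ∃ w, IsGLB (boundedDropMajorants ε δ A u) w :=
    ⟨_, isGLB_csInf ⟨u, hu⟩ hbdd⟩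
  have le_w {x : X} {c : ℝ} (h : ∀ f ∈ boundedDropMajorants ε δ A u, c ≤ f x) : c ≤ w x :=
    (isGLB_pi.1 hw x).2 (forall_mem_image.2 h)
  exact ⟨w, ⟨fun x hx ↦ le_w fun f hf ↦ hf.1 x hx, fun x hx y hyx ↦ sub_le_iff_le_add.1 <|
    le_w fun f hf ↦ sub_le_iff_le_add.2 <| (hw.1 hf y).trans (hf.2 x hx y hyx)⟩, hw.1⟩

lemma supBall_eq_add_of_isLeast_boundedDropMajorants (hε : 0 ≤ ε) {w : X → ℝ}
    (hw : IsLeast (boundedDropMajorants ε δ A u) w) (hx : x ∉ A) :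
    supBall ε w x = w x + δ := by
  classical
  obtain ⟨⟨hwA, hw_drop⟩, hw_le⟩ := hw
  have hle : supBall ε w x ≤ w x + δ := supBall_le hε (hw_drop x hx)
  refine hle.antisymm ?_
  set f : X → ℝ := Function.update w x (supBall ε w x - δ)
  have hfx : f x = supBall ε w x - δ := Function.update_self ..
  have hf_of_ne {y : X} (hy : y ≠ x) : f y = w y := Function.update_of_ne hy ..
  have hfw : f ≤ w := update_le_self_iff.2 (sub_le_iff_le_add.2 hle)
  have hf_mem : f ∈ boundedDropMajorants ε δ A u := by
    refine ⟨fun y hy ↦ ?_, fun y hy z hzy ↦ (hfw z).trans ?_⟩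
    · rw [hf_of_ne (ne_of_mem_of_not_mem hy hx)]
      exact hwA y hy
    · rcases eq_or_ne y x with rfl | hyx
      · rw [hfx, sub_add_cancel]
        exact le_csSup ⟨w y + δ, forall_mem_image.2 (hw_drop y hy)⟩ (mem_image_of_mem w hzy)
      · rw [hf_of_ne hyx]
        exact hw_drop y hy z hzy
  linarith [hw_le hf_mem x]

lemma IsDiscreteSubAt.le_add (hu : IsDiscreteSubAt ε u x) (hδ : supBall ε u x ≤ u x + δ)
    (hy : dist y x ≤ ε) : u x ≤ u y + δ := by
  linarith [hu y hy]

lemma exists_isDiscreteSubAt_add_le_supBall [PreconnectedSpace X] (hε : 0 < ε)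
    (hub : BddAbove (range u)) (hu : ∀ x ∉ S, IsDiscreteSubAt ε u x)
    {x₀ : X} (hx₀ : u x₀ + δ < supBall ε u x₀) :
    ∃ w ≤ u, w x₀ = u x₀ ∧ (∀ x ∉ S, IsDiscreteSubAt ε w x) ∧
      ∀ x ∉ S, w x + δ ≤ supBall ε w x := by
  let A : Set X := S ∪ {x | u x + δ < supBall ε u x}
  have hx₀A : x₀ ∈ A := Or.inr hx₀
  have supBall_u {x : X} (hx : x ∉ A) : supBall ε u x ≤ u x + δ :=
    not_lt.1 fun h ↦ hx (Or.inr h)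
  have le_u {x : X} (hx : x ∉ A) (y : X) (hyx : dist y x ≤ ε) : u x ≤ u y + δ :=
    (hu x fun h ↦ hx (Or.inl h)).le_add (supBall_u hx) hyx
  have hu_mem : u ∈ boundedDropMajorants ε δ A u :=
    ⟨fun _ _ ↦ le_rfl, fun x hx y hyx ↦ (le_supBall hub hyx).trans (supBall_u hx)⟩
  obtain ⟨w, hw⟩ := exists_isLeast_boundedDropMajorants hε ⟨x₀, hx₀A⟩ hu_mem
  have hwu : w ≤ u := hw.2 hu_mem
  have hwA {x : X} (hx : x ∈ A) : w x = u x := (hwu x).antisymm (hw.1.1 x hx)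
  have hwb : BddAbove (range w) := BddAbove.range_mono u hwu hub
  have le_supBall_w {x : X} (hx : u x + δ < supBall ε u x) : supBall ε u x ≤ supBall ε w x := by
    refine le_of_forall_lt fun c hc ↦ ?_
    obtain ⟨y, hyx, hy⟩ := exists_lt_of_lt_supBall hε.le (max_lt hc hx)
    have hyA : y ∈ A := by
      by_contra hyA
      linarith [le_u hyA x (by rwa [dist_comm]), le_max_right c (u x + δ)]
    calc c < u y := (le_max_left ..).trans_lt hy
      _ = w y := (hwA hyA).symm
      _ ≤ supBall ε w x := le_supBall hwb hyx
  have w_slope (x : X) (hx : x ∉ S) : w x + δ ≤ supBall ε w x := by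
    by_cases hxA : x ∈ A
    · have hx_slope : u x + δ < supBall ε u x := hxA.resolve_left hx
      linarith [hwu x, le_supBall_w hx_slope]
    · exact (supBall_eq_add_of_isLeast_boundedDropMajorants hε.le hw hxA).ge
  refine ⟨w, hwu, hwA hx₀A, fun x hx y hyx ↦ ?_, w_slope⟩
  by_cases hyA : y ∈ A
  · by_cases hxA : x ∈ A
    · rw [hwA hxA, hwA hyA]
      linarith [hu x hx y hyx, le_supBall_w (hxA.resolve_left hx)]
    · linarith [hwu x, hwA hyA, le_u hxA y hyx, w_slope x hx]
  · linarith [hw.1.2 y hyA x (by rwa [dist_comm]), w_slope x hx]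

lemma add_le_of_lt_supBall [PreconnectedSpace X] (hε : 0 < ε) (hub : BddAbove (range u))
    (hvb : BddAbove (range v)) (hS : ∀ x ∈ S, u x + v x ≤ β)
    (hu : ∀ x ∉ S, IsDiscreteSubAt ε u x) (hv : ∀ x ∉ S, IsDiscreteSubAt ε v x)
    (hx : u x < supBall ε u x) : u x + v x ≤ β := by
  obtain ⟨s, hus, hs⟩ := exists_between hx
  obtain ⟨w, hwu, hwx, hw, hw_slope⟩ :=
    exists_isDiscreteSubAt_add_le_supBall (δ := s - u x) hε hub hu (by linarith)
  rw [← hwx]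
  exact add_le_of_add_le_supBall hε.le (sub_pos.2 hus) (BddAbove.range_mono u hwu hub) hvb
    (fun y hy ↦ by linarith [hwu y, hS y hy]) hw hw_slope hv x

theorem add_le_of_forall_isDiscreteSubAt [PreconnectedSpace X] (hε : 0 < ε) (hS : S.Nonempty)
    (hub : BddAbove (range u)) (hvb : BddAbove (range v)) (huv : ∀ x ∈ S, u x + v x ≤ β)
    (hu : ∀ x ∉ S, IsDiscreteSubAt ε u x) (hv : ∀ x ∉ S, IsDiscreteSubAt ε v x) (x : X) :
    u x + v x ≤ β := by
  refine forall_of_forall_dist_le hε (hS.imp huv) (fun x y hyx hy ↦ ?_) x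
  by_contra hx
  have hxS : x ∉ S := fun hxS ↦ hx (huv x hxS)
  have hux : supBall ε u x ≤ u x :=
    not_lt.1 fun hlt ↦ hx (add_le_of_lt_supBall hε hub hvb huv hu hv hlt)
  have hvx : supBall ε v x ≤ v x := by
    simp only [add_comm (u _)] at hx huv
    exact not_lt.1 fun hlt ↦ hx (add_le_of_lt_supBall hε hvb hub huv hv hu hlt)
  linarith [hu x hxS y hyx, hv x hxS y hyx]

end DiscreteComparison

section LengthSpace

variable {X : Type*} [MetricSpace X] {U : Set X} {x z : X} {r s τ : ℝ}

lemma edist_add_edist_le_pathLength (γ : Path x z) (t : unitInterval) :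
    edist x (γ t) + edist (γ t) z ≤ pathLength γ := by
  have hleft : edist (γ 0) (γ t) ≤ eVariationOn γ (Iic t) :=
    eVariationOn.edist_le _ unitInterval.nonneg' self_mem_Iic
  have hright : edist (γ t) (γ 1) ≤ eVariationOn γ (Ici t) :=
    eVariationOn.edist_le _ self_mem_Ici unitInterval.le_one'
  rw [γ.source] at hleft
  rw [γ.target] at hright
  calc edist x (γ t) + edist (γ t) z
      ≤ eVariationOn γ (Iic t) + eVariationOn γ (Ici t) := add_le_add hleft hright
    _ ≤ eVariationOn γ (Iic t ∪ Ici t) :=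
        eVariationOn.add_le_union _ fun _ ha _ hb ↦ le_trans ha hb
    _ ≤ pathLength γ := eVariationOn.mono _ (subset_univ _)

namespace IsLengthSpace

lemma exists_path_dist_add_dist_lt (hX : IsLengthSpace X) (x z : X) (hτ : 0 < τ) :
    ∃ γ : Path x z, ∀ t, dist x (γ t) + dist (γ t) z < dist x z + τ := by
  have hlt : ⨅ γ : Path x z, pathLength γ < edist x z + ENNReal.ofReal τ := by
    rw [← hX x z]
    exact ENNReal.lt_add_right (edist_ne_top x z) (ENNReal.ofReal_pos.2 hτ).ne'
  obtain ⟨γ, hγ⟩ := iInf_lt_iff.1 hlt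
  refine ⟨γ, fun t ↦ ?_⟩
  have h := (edist_add_edist_le_pathLength γ t).trans_lt hγ
  simp only [edist_dist] at h
  rw [← ENNReal.ofReal_add dist_nonneg dist_nonneg, ← ENNReal.ofReal_add dist_nonneg hτ.le] at h
  exact (ENNReal.ofReal_lt_ofReal_iff_of_nonneg (by positivity)).1 h

lemma preconnectedSpace (hX : IsLengthSpace X) : PreconnectedSpace X := by
  refine ⟨isPreconnected_of_forall_pair fun x _ y _ ↦ ?_⟩
  obtain ⟨γ, -⟩ := hX.exists_path_dist_add_dist_lt x y one_pos
  exact ⟨range γ, subset_univ _, ⟨0, γ.source⟩, ⟨1, γ.target⟩, isPreconnected_range γ.continuous⟩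

lemma exists_mem_frontier_dist_add_dist_lt (hX : IsLengthSpace X) (hx : x ∈ U) (hz : z ∉ U)
    (hτ : 0 < τ) : ∃ p ∈ frontier U, dist x p + dist p z < dist x z + τ := by
  obtain ⟨γ, hγ⟩ := hX.exists_path_dist_add_dist_lt x z hτ
  have h0 : (0 : unitInterval) ∈ γ ⁻¹' U := by rwa [mem_preimage, γ.source]
  have h1 : (1 : unitInterval) ∉ γ ⁻¹' U := by rwa [mem_preimage, γ.target]
  obtain ⟨t, ht⟩ := nonempty_frontier_iff.2 ⟨⟨0, h0⟩, ne_univ_iff_exists_notMem _ |>.2 ⟨1, h1⟩⟩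
  exact ⟨γ t, γ.continuous.frontier_preimage_subset U ht, hγ t⟩

lemma le_mul_dist_of_forall_mem_frontier (hX : IsLengthSpace X) (hx : x ∈ U) (hz : z ∉ U)
    {b : ℝ≥0} {c : ℝ} (h : ∀ p ∈ frontier U, c ≤ b * (dist x p + dist p z)) :
    c ≤ b * dist x z := by
  refine le_of_forall_pos_le_add fun η hη ↦ ?_
  have hτ : 0 < η / (b + 1) := by positivity
  obtain ⟨p, hp, hpd⟩ := hX.exists_mem_frontier_dist_add_dist_lt hx hz hτ
  calc c ≤ b * (dist x p + dist p z) := h p hp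
    _ ≤ b * (dist x z + η / (b + 1)) := by gcongr
    _ = b * dist x z + η * (b / (b + 1)) := by ring
    _ ≤ b * dist x z + η := by
        gcongr
        exact mul_le_of_le_one_right hη.le (div_le_one_of_le₀ (by linarith) (by positivity))

lemma exists_dist_le_dist_lt (hX : IsLengthSpace X) (hr : 0 ≤ r) (hs : 0 ≤ s)
    (hxz : dist x z ≤ r + s) (hτ : 0 < τ) : ∃ y, dist x y ≤ r ∧ dist y z < s + τ := by
  rcases le_total (dist x z) r with hxr | hrx
  · exact ⟨z, hxr, by rw [dist_self]; positivity⟩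
  obtain ⟨γ, hγ⟩ := hX.exists_path_dist_add_dist_lt x z hτ
  have hcont : Continuous fun t ↦ dist x (γ t) := continuous_const.dist γ.continuous
  have hr_mem : r ∈ Icc (dist x (γ 0)) (dist x (γ 1)) := by
    rw [γ.source, γ.target, dist_self]
    exact ⟨hr, hrx⟩
  obtain ⟨t, rfl⟩ := intermediate_value_univ 0 1 hcont hr_mem
  exact ⟨γ t, le_rfl, by linarith [hγ t]⟩

lemma supBall_supBall (hX : IsLengthSpace X) {u : X → ℝ} (hu : UniformContinuous u)
    (hub : BddAbove (range u)) (hr : 0 ≤ r) (hs : 0 ≤ s) (x : X) :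
    supBall r (supBall s u) x = supBall (r + s) u x := by
  have hsb := bddAbove_range_supBall hs hub
  refine le_antisymm (supBall_le hr fun y hyx ↦ supBall_le hs fun z hzy ↦ le_supBall hub ?_)
    (supBall_le (add_nonneg hr hs) fun z hzx ↦ le_of_forall_pos_le_add fun η hη ↦ ?_)
  · linarith [dist_triangle z y x]
  obtain ⟨τ, hτ, hτu⟩ := Metric.uniformContinuous_iff.1 hu η hη
  obtain ⟨y, hxy, hyz⟩ :=
    hX.exists_dist_le_dist_lt hr hs (by rwa [dist_comm]) (half_pos hτ)
  obtain ⟨z', hyz', hzz'⟩ := hX.exists_dist_le_dist_lt hs (half_pos hτ).le hyz.le (half_pos hτ)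
  have hlt : |u z' - u z| < η := hτu (by linarith)
  calc u z ≤ u z' + η := by linarith [neg_abs_le (u z' - u z)]
    _ ≤ supBall s u y + η := by gcongr; exact le_supBall hub (by rwa [dist_comm])
    _ ≤ supBall r (supBall s u) x + η := by gcongr; exact le_supBall hsb (by rwa [dist_comm])

lemma lipschitzWith_piecewise (hX : IsLengthSpace X) {K : ℝ≥0} {f g : X → ℝ}
    [DecidablePred (· ∈ U)] (hf : LipschitzWith K f) (hg : LipschitzWith K g)
    (hfg : EqOn f g (frontier U)) : LipschitzWith K (U.piecewise f g) := by
  have across {x y : X} (hx : x ∈ U) (hy : y ∉ U) : dist (f x) (g y) ≤ K * dist x y := by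
    refine hX.le_mul_dist_of_forall_mem_frontier hx hy fun p hp ↦ ?_
    calc dist (f x) (g y) ≤ dist (f x) (f p) + dist (g p) (g y) := by
          rw [← hfg hp]; exact dist_triangle ..
      _ ≤ K * dist x p + K * dist p y := add_le_add (hf.dist_le_mul x p) (hg.dist_le_mul p y)
      _ = K * (dist x p + dist p y) := by ring
  refine LipschitzWith.of_dist_le_mul fun x y ↦ ?_
  by_cases hx : x ∈ U <;> by_cases hy : y ∈ U <;>
    simp only [piecewise_eq_of_mem, piecewise_eq_of_notMem, hx, hy, not_false_eq_true]
  · exact hf.dist_le_mul x y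
  · exact across hx hy
  · rw [dist_comm, dist_comm x]
    exact across hy hx
  · exact hg.dist_le_mul x y

end IsLengthSpace

end LengthSpace

section ComparisonWithCones

variable {X : Type*} [MetricSpace X] {u v f : X → ℝ} {Ω U Y : Set X} {K b : ℝ≥0} {x z : X}
  {M ε : ℝ}

lemma lipOn_le_coe_iff : lipOn u U ≤ K ↔ LipschitzOnWith K u U := by
  have key {x y : X} (hxy : x ≠ y) :
      ENNReal.ofReal (|u x - u y| / dist x y) ≤ K ↔ dist (u x) (u y) ≤ K * dist x y := by
    rw [ENNReal.ofReal_le_iff_le_toReal ENNReal.coe_ne_top, ENNReal.coe_toReal,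
      div_le_iff₀ (dist_pos.2 hxy), Real.dist_eq]
  simp only [lipOn, iSup_le_iff, lipschitzOnWith_iff_dist_le_mul]
  refine ⟨fun h x hx y hy ↦ ?_, fun h x hx y hy hxy ↦ (key hxy).2 (h x hx y hy)⟩
  rcases eq_or_ne x y with rfl | hxy
  · simp
  · exact (key hxy).1 (h x hx y hy hxy)

lemma lipOn_lt_top_iff : lipOn u U < ⊤ ↔ ∃ K : ℝ≥0, LipschitzOnWith K u U :=
  ⟨fun h ↦ ⟨(lipOn u U).toNNReal, lipOn_le_coe_iff.1 (ENNReal.coe_toNNReal h.ne).ge⟩,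
    fun ⟨_, hK⟩ ↦ (lipOn_le_coe_iff.2 hK).trans_lt ENNReal.coe_lt_top⟩

lemma lipOn_neg (u : X → ℝ) (U : Set X) : lipOn (-u) U = lipOn u U :=
  ENNReal.eq_of_forall_le_nnreal_iff fun K ↦ by
    simp only [lipOn_le_coe_iff, lipschitzOnWith_neg_iff]

/-- Comparison with cones from above: on every open `U ⊆ Ω`, the function `u` lies below each
cone of nonnegative slope `b` with vertex outside `U` that it lies below on `frontier U`.
Comparison with cones from below is `IsCCAOn (-u) Ω`. -/
def IsCCAOn (u : X → ℝ) (Ω : Set X) : Prop :=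
  ∀ U ⊆ Ω, IsOpen U → ∀ z ∉ U, ∀ (a : ℝ) (b : ℝ≥0),
    (∀ p ∈ frontier U, u p ≤ a + b * dist p z) → ∀ x ∈ U, u x ≤ a + b * dist x z

namespace IsCCAOn

-- The vertex `z` may lie in `U`, since `u` touches the cone there.
lemma le_add_mul_dist (hu : IsCCAOn u Ω) (hUΩ : U ⊆ Ω) (hU : IsOpen U)
    (h : ∀ p ∈ frontier U, u p ≤ u z + b * dist p z) (hx : x ∈ U) :
    u x ≤ u z + b * dist x z := by
  rcases eq_or_ne x z with rfl | hxz
  · simp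
  refine hu (U ∩ {z}ᶜ) (inter_subset_left.trans hUΩ) (hU.inter isOpen_compl_singleton) z
    (fun hz ↦ hz.2 rfl) (u z) b (fun p hp ↦ ?_) x ⟨hx, hxz⟩
  rcases frontier_inter_subset _ _ hp with hpU | hpz
  · exact h p hpU.1
  · rw [frontier_compl] at hpz
    obtain rfl : p = z := isClosed_singleton.frontier_subset hpz.2
    simp

lemma le_of_forall_notMem (hu : IsCCAOn u Ω) (hcont : Continuous u) (hΩ : Ωᶜ.Nonempty)
    (hM : ∀ x ∉ Ω, u x ≤ M) (x : X) : u x ≤ M := by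
  by_contra! hx
  obtain ⟨z, hz⟩ := hΩ
  have hopen : IsOpen {x | M < u x} := isOpen_lt continuous_const hcont
  have hsub : {x | M < u x} ⊆ Ω := fun p hp ↦ by_contra fun hpΩ ↦ (hM p hpΩ).not_gt hp
  have hfr (p : X) (hp : p ∈ frontier {x | M < u x}) : u p ≤ M + (0 : ℝ≥0) * dist p z := by
    simp [(frontier_lt_subset_eq continuous_const hcont hp).symm.le]
  have h := hu _ hsub hopen z (fun hz' ↦ hz (hsub hz')) M 0 hfr x hx
  simp only [NNReal.coe_zero, zero_mul, add_zero] at h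
  exact h.not_gt hx

lemma of_isLUB {P : Set (X → ℝ)} (hu : IsLUB P u) (hP : ∀ w ∈ P, IsCCAOn w Ω) :
    IsCCAOn u Ω := fun U hUΩ hU z hz a b h x hx ↦
  (isLUB_pi.1 hu x).2 <| forall_mem_image.2 fun w hw ↦
    hP w hw U hUΩ hU z hz a b (fun p hp ↦ (hu.1 hw p).trans (h p hp)) x hx

lemma piecewise_sup [DecidablePred (· ∈ U)] (hu : IsCCAOn u Ω) (hf : IsCCAOn f U)
    (hU : IsOpen U) (hfu : ∀ p ∈ frontier U, f p ≤ u p) :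
    IsCCAOn (U.piecewise (u ⊔ f) u) Ω := by
  intro V hVΩ hV z hz a b h x hx
  have hw {p : X} (hp : p ∈ U) : U.piecewise (u ⊔ f) u p = u p ⊔ f p :=
    piecewise_eq_of_mem _ _ _ hp
  have hw' {p : X} (hp : p ∉ U) : U.piecewise (u ⊔ f) u p = u p :=
    piecewise_eq_of_notMem _ _ _ hp
  have hu_le (p : X) : u p ≤ U.piecewise (u ⊔ f) u p := by
    by_cases hp : p ∈ U
    · exact hw hp ▸ le_sup_left
    · exact (hw' hp).ge
  have hf_le {p : X} (hp : p ∈ closure U) : f p ≤ U.piecewise (u ⊔ f) u p := by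
    by_cases hpU : p ∈ U
    · exact hw hpU ▸ le_sup_right
    · exact (hfu p (hU.frontier_eq ▸ ⟨hp, hpU⟩)).trans (hu_le p)
  have hu_frontier (p : X) (hp : p ∈ frontier V) : u p ≤ a + b * dist p z :=
    (hu_le p).trans (h p hp)
  have hu_cone {p : X} (hp : p ∈ closure V) : u p ≤ a + b * dist p z := by
    rw [closure_eq_self_union_frontier] at hp
    exact hp.elim (hu V hVΩ hV z hz a b hu_frontier p) (hu_frontier p)
  by_cases hxU : x ∈ U
  · rw [hw hxU]
    refine sup_le (hu_cone (subset_closure hx)) <| hf (V ∩ U) inter_subset_right (hV.inter hU) z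
      (fun hzVU ↦ hz hzVU.1) a b (fun p hp ↦ ?_) x ⟨hx, hxU⟩
    rcases frontier_inter_subset _ _ hp with ⟨hpV, hpU⟩ | ⟨hpV, hpU⟩
    · exact (hf_le hpU).trans (h p hpV)
    · exact (hfu p hpU).trans (hu_cone hpV)
  · rw [hw' hxU]
    exact hu_cone (subset_closure hx)

lemma lipschitzOnWith (hu : IsCCAOn u Ω) (hu' : IsCCAOn (-u) Ω) (hUΩ : U ⊆ Ω) (hU : IsOpen U)
    (h : LipschitzOnWith K u (frontier U)) : LipschitzOnWith K u U := by
  have hfr {y p : X} (hy : y ∈ U) (hp : p ∈ frontier U) : u p ≤ u y + K * dist p y := by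
    have hneg (q : X) (hq : q ∈ frontier U) : (-u) q ≤ (-u) p + K * dist q p := by
      have hpq := h.le_add_mul hp hq
      rw [dist_comm] at hpq
      simp only [Pi.neg_apply]
      linarith
    have hy_le := hu'.le_add_mul_dist hUΩ hU hneg hy
    simp only [Pi.neg_apply, dist_comm y] at hy_le
    linarith
  exact LipschitzOnWith.of_le_add_mul K fun x hx y hy ↦
    hu.le_add_mul_dist hUΩ hU (fun p hp ↦ hfr hy hp) hx

lemma two_mul_supBall_le (hu : IsCCAOn u Ω) (hub : BddAbove (range u)) (hε : 0 < ε)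
    (hx : ball x (2 * ε) ⊆ Ω) : 2 * supBall ε u x ≤ u x + supBall (2 * ε) u x := by
  have hu_le : u x ≤ supBall (2 * ε) u x := le_supBall hub (by rw [dist_self]; positivity)
  -- The slope of the cone with vertex `x` and height `u x` there that reaches
  -- `supBall (2 * ε) u x` at distance `2 * ε`.
  let b : ℝ≥0 := ⟨(supBall (2 * ε) u x - u x) / (2 * ε), by
    have := sub_nonneg.2 hu_le
    positivity⟩
  have hb : (b : ℝ) * (2 * ε) = supBall (2 * ε) u x - u x :=
    div_mul_cancel₀ _ (by positivity)
  have hsphere (p : X) (hp : p ∈ frontier (ball x (2 * ε))) : u p ≤ u x + b * dist p x := by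
    have hpx : dist p x = 2 * ε := frontier_ball_subset_sphere hp
    rw [hpx, hb]
    linarith [le_supBall hub hpx.le]
  have hcone : supBall ε u x ≤ u x + b * ε := supBall_le hε.le fun p hp ↦
    calc u p ≤ u x + b * dist p x :=
          hu.le_add_mul_dist hx isOpen_ball hsphere (mem_ball.2 (by linarith))
      _ ≤ u x + b * ε := by gcongr
  linarith

lemma isDiscreteSubAt_supBall (hX : IsLengthSpace X) (hu : IsCCAOn u Ω)
    (hcont : UniformContinuous u) (hub : BddAbove (range u)) (hε : 0 < ε)
    (hx : ball x (2 * ε) ⊆ Ω) : IsDiscreteSubAt ε (supBall ε u) x := by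
  intro y hyx
  rw [hX.supBall_supBall hcont hub hε.le hε.le, ← two_mul ε]
  linarith [hu.two_mul_supBall_le hub hε hx, le_supBall hub (dist_comm x y ▸ hyx)]

end IsCCAOn

theorem IsCCAOn.add_nonpos (hX : IsLengthSpace X) (hΩ : Ωᶜ.Nonempty) (hu : IsCCAOn u Ω)
    (hv : IsCCAOn v Ω) (hu_cont : UniformContinuous u) (hv_cont : UniformContinuous v)
    (hub : BddAbove (u '' Ωᶜ)) (hvb : BddAbove (v '' Ωᶜ)) (huv : ∀ x ∉ Ω, u x + v x ≤ 0)
    (x : X) : u x + v x ≤ 0 := by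
  have := hX.preconnectedSpace
  have hub : BddAbove (range u) := hub.imp fun M hM ↦ forall_mem_range.2 <|
    hu.le_of_forall_notMem hu_cont.continuous hΩ (forall_mem_image.1 hM)
  have hvb : BddAbove (range v) := hvb.imp fun M hM ↦ forall_mem_range.2 <|
    hv.le_of_forall_notMem hv_cont.continuous hΩ (forall_mem_image.1 hM)
  refine le_of_forall_pos_le_add fun η hη ↦ ?_
  obtain ⟨δ, hδ, hδu⟩ := Metric.uniformContinuous_iff.1 hu_cont (η / 2) (half_pos hη)
  obtain ⟨δ', hδ', hδv⟩ := Metric.uniformContinuous_iff.1 hv_cont (η / 2) (half_pos hη)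
  obtain ⟨ε, hε, hεδ, hεδ'⟩ : ∃ ε > 0, 3 * ε ≤ δ ∧ 3 * ε ≤ δ' :=
    ⟨min δ δ' / 3, by positivity, by linarith [min_le_left δ δ'], by linarith [min_le_right δ δ']⟩
  let S : Set X := {p | ¬ ball p (2 * ε) ⊆ Ω}
  have hS : S.Nonempty := hΩ.imp fun z hz hball ↦ hz (hball (mem_ball_self (by positivity)))
  have hS_le (p : X) (hp : p ∈ S) : supBall ε u p + supBall ε v p ≤ η := by
    obtain ⟨y, hyp, hy⟩ := not_subset.1 hp
    rw [mem_ball'] at hyp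
    linarith [huv y hy, supBall_le_add_of_dist_lt hε.le hδu (x := p) (y := y) (by linarith),
      supBall_le_add_of_dist_lt hε.le hδv (x := p) (y := y) (by linarith)]
  have hux : u x ≤ supBall ε u x := le_supBall hub (by rw [dist_self]; exact hε.le)
  have hvx : v x ≤ supBall ε v x := le_supBall hvb (by rw [dist_self]; exact hε.le)
  have hsup : supBall ε u x + supBall ε v x ≤ η :=
    add_le_of_forall_isDiscreteSubAt hε hS (bddAbove_range_supBall hε.le hub)
      (bddAbove_range_supBall hε.le hvb) hS_le
      (fun p hp ↦ hu.isDiscreteSubAt_supBall hX hu_cont hub hε (not_not.1 hp))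
      (fun p hp ↦ hv.isDiscreteSubAt_supBall hX hv_cont hvb hε (not_not.1 hp)) x
  linarith

lemma IsLengthSpace.isCCAOn_sub_mul_dist (hX : IsLengthSpace X) (hz : z ∉ Ω) (a : ℝ) (b : ℝ≥0) :
    IsCCAOn (fun x ↦ a - b * dist x z) Ω := by
  intro U hUΩ _ z' hz' a' b' h x hx
  have hzU : z ∉ U := fun hzU ↦ hz (hUΩ hzU)
  rcases le_total b' b with hb | hb
  · have hcone : a - a' - b' * dist x z' ≤ b * dist x z := by
      refine hX.le_mul_dist_of_forall_mem_frontier hx hzU fun p hp ↦ ?_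
      calc a - a' - b' * dist x z'
          ≤ b * dist p z + b' * (dist p z' - dist x z') := by linarith [h p hp]
        _ ≤ b * dist p z + b' * dist x p := by
            gcongr
            linarith [dist_triangle_left p z' x]
        _ ≤ b * dist p z + b * dist x p := by gcongr
        _ = b * (dist x p + dist p z) := by ring
    linarith
  · have hcone : a - a' - b * dist x z ≤ b' * dist x z' := by
      refine hX.le_mul_dist_of_forall_mem_frontier hx hz' fun p hp ↦ ?_
      calc a - a' - b * dist x z
          ≤ b * (dist p z - dist x z) + b' * dist p z' := by linarith [h p hp]
        _ ≤ b * dist x p + b' * dist p z' := by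
            gcongr
            linarith [dist_triangle_left p z x]
        _ ≤ b' * dist x p + b' * dist p z' := by gcongr
        _ = b' * (dist x p + dist p z') := by ring
    linarith

lemma IsCCAOn.of_forall_lipOn_eq (hX : IsLengthSpace X) (hu : Continuous u)
    (h : ∀ U : Set X, IsOpen U → U ⊆ Ω → lipOn u U = lipOn u (frontier U)) : IsCCAOn u Ω := by
  intro U hUΩ hU z hz a b hcone x hx
  have hcone_cont : Continuous fun p ↦ a + b * dist p z := by fun_prop
  by_contra! hlt
  let W : Set X := U ∩ {p | a + b * dist p z < u p}
  have hW : IsOpen W := hU.inter (isOpen_lt hcone_cont hu)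
  have hxW : x ∈ W := ⟨hx, hlt⟩
  have hu_eq (p : X) (hp : p ∈ frontier W) : u p = a + b * dist p z := by
    rcases frontier_inter_subset _ _ hp with hpU | hpW
    · exact (hcone p hpU.1).antisymm
        (closure_lt_subset_le hcone_cont hu hpU.2)
    · exact (frontier_lt_subset_eq hcone_cont hu hpW.2).symm
  have hLip_frontier : LipschitzOnWith b u (frontier W) :=
    LipschitzOnWith.of_le_add_mul b fun p hp q hq ↦ by
      rw [hu_eq p hp, hu_eq q hq, add_assoc, ← mul_add]
      gcongr
      linarith [dist_triangle p q z]
  have hLip : LipschitzOnWith b u (closure W) := by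
    refine LipschitzOnWith.closure hu.continuousOn (lipOn_le_coe_iff.1 ?_)
    exact (h W hW (inter_subset_left.trans hUΩ)).trans_le (lipOn_le_coe_iff.2 hLip_frontier)
  have hux : u x - a ≤ b * dist x z := by
    refine hX.le_mul_dist_of_forall_mem_frontier hxW (fun hzW ↦ hz hzW.1) fun p hp ↦ ?_
    have hxp := hLip.le_add_mul (subset_closure hxW) (frontier_subset_closure hp)
    linarith [hu_eq p hp]
  linarith

lemma IsCCAOn.lipOn_eq (hu : IsCCAOn u Ω) (hu' : IsCCAOn (-u) Ω) (hcont : Continuous u)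
    (hUΩ : U ⊆ Ω) (hU : IsOpen U) : lipOn u U = lipOn u (frontier U) :=
  ENNReal.eq_of_forall_le_nnreal_iff fun K ↦ by
    rw [lipOn_le_coe_iff, lipOn_le_coe_iff]
    exact ⟨fun h ↦ (LipschitzOnWith.closure hcont.continuousOn h).mono frontier_subset_closure,
      hu.lipschitzOnWith hu' hUΩ hU⟩

theorem isAMExtension_iff (hX : IsLengthSpace X) : IsAMExtension Y f u ↔
    (∃ K : ℝ≥0, LipschitzWith K u) ∧ EqOn u f Y ∧ IsCCAOn u Yᶜ ∧ IsCCAOn (-u) Yᶜ := by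
  simp only [IsAMExtension, lipOn_lt_top_iff, lipschitzOnWith_univ]
  refine and_congr_right fun ⟨_, hK⟩ ↦ and_congr_right fun _ ↦ ⟨fun h ↦ ⟨?_, ?_⟩, ?_⟩
  · exact .of_forall_lipOn_eq hX hK.continuous h
  · exact .of_forall_lipOn_eq hX hK.continuous.neg (by simpa only [lipOn_neg] using h)
  · exact fun ⟨hu, hu'⟩ U hU hUY ↦ hu.lipOn_eq hu' hK.continuous hUY hU

end ComparisonWithCones

section Lipschitz

variable {X : Type*} [PseudoMetricSpace X] {u : X → ℝ} {K : ℝ≥0}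

lemma lipschitzWith_sub_mul_dist (a : ℝ) (b : ℝ≥0) (z : X) :
    LipschitzWith b fun x ↦ a - b * dist x z :=
  LipschitzWith.of_le_add_mul b fun x y ↦ by
    rw [sub_add_eq_add_sub, add_sub_assoc, ← mul_sub]
    nlinarith [dist_triangle y x z, dist_comm x y, b.coe_nonneg]

lemma lipschitzWith_of_isLUB {P : Set (X → ℝ)} (hu : IsLUB P u)
    (hP : ∀ w ∈ P, LipschitzWith K w) : LipschitzWith K u :=
  LipschitzWith.of_le_add_mul K fun x y ↦
    (isLUB_pi.1 hu x).2 <| forall_mem_image.2 fun w hw ↦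
      ((hP w hw).le_add_mul x y).trans (add_le_add_left (hu.1 hw y) _)

end Lipschitz

section Perron

variable {X : Type*} [MetricSpace X] {F u : X → ℝ} {Y : Set X} {K : ℝ≥0}

/-- The competitors in Perron's method: the `K`-Lipschitz functions below `F` on `Y` that satisfy
comparison with cones from above off `Y`. -/
def perronClass (K : ℝ≥0) (F : X → ℝ) (Y : Set X) : Set (X → ℝ) :=
  {w | LipschitzWith K w ∧ (∀ y ∈ Y, w y ≤ F y) ∧ IsCCAOn w Yᶜ}

lemma sub_mul_dist_mem_perronClass (hX : IsLengthSpace X) (hF : LipschitzOnWith K F Y) {y : X}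
    (hy : y ∈ Y) : (fun x ↦ F y - K * dist x y) ∈ perronClass K F Y := by
  refine ⟨lipschitzWith_sub_mul_dist _ _ _, fun x hx ↦ ?_,
    hX.isCCAOn_sub_mul_dist (notMem_compl_iff.2 hy) _ _⟩
  have hyx := hF.le_add_mul hy hx
  rw [dist_comm] at hyx
  exact sub_le_iff_le_add.2 hyx

lemma exists_isGreatest_perronClass (hX : IsLengthSpace X) (hY : Y.Nonempty)
    (hF : LipschitzOnWith K F Y) : ∃ u, IsGreatest (perronClass K F Y) u := by
  obtain ⟨y, hy⟩ := hY
  have hbdd : BddAbove (perronClass K F Y) :=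
    ⟨fun x ↦ F y + K * dist x y, fun w ⟨hw, hwF, _⟩ x ↦
      (hw.le_add_mul x y).trans (add_le_add_left (hwF y hy) _)⟩
  obtain ⟨u, hu⟩ : ∃ u, IsLUB (perronClass K F Y) u :=
    ⟨_, isLUB_csSup ⟨_, sub_mul_dist_mem_perronClass hX hF hy⟩ hbdd⟩
  exact ⟨u, ⟨lipschitzWith_of_isLUB hu fun w hw ↦ hw.1,
    fun z hz ↦ (isLUB_pi.1 hu z).2 (forall_mem_image.2 fun w hw ↦ hw.2.1 z hz),
    .of_isLUB hu fun w hw ↦ hw.2.2⟩, hu.1⟩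

lemma eqOn_of_isGreatest_perronClass (hX : IsLengthSpace X) (hF : LipschitzOnWith K F Y)
    (hu : IsGreatest (perronClass K F Y) u) : EqOn u F Y := by
  intro y hy
  refine (hu.1.2.1 y hy).antisymm ?_
  simpa only [dist_self, mul_zero, sub_zero] using hu.2 (sub_mul_dist_mem_perronClass hX hF hy) y

-- If `u` were somewhere below a cone that it dominates on the frontier, raising `u` to that cone
-- would produce a larger competitor; cones steeper than `K` are handled by the Lipschitz bound.
lemma isCCAOn_neg_of_isGreatest_perronClass (hX : IsLengthSpace X)
    (hu : IsGreatest (perronClass K F Y) u) : IsCCAOn (-u) Yᶜ := by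
  classical
  obtain ⟨⟨hLip, huF, hcca⟩, hu_le⟩ := hu
  intro U hUY hU z hz a b h x hx
  simp only [Pi.neg_apply] at h ⊢
  rcases le_total b K with hb | hb
  · let f : X → ℝ := fun p ↦ -a - b * dist p z
    have hfu (p : X) (hp : p ∈ frontier U) : f p ≤ u p := by linarith [h p hp]
    have hf_Lip : LipschitzWith K f := (lipschitzWith_sub_mul_dist _ _ _).weaken hb
    have hmem : U.piecewise (u ⊔ f) u ∈ perronClass K F Y := by
      refine ⟨hX.lipschitzWith_piecewise ?_ hLip fun p hp ↦ sup_eq_left.2 (hfu p hp),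
        fun y hy ↦ ?_, hcca.piecewise_sup (hX.isCCAOn_sub_mul_dist hz _ _) hU hfu⟩
      · exact max_self K ▸ hLip.max hf_Lip
      · rw [piecewise_eq_of_notMem _ _ _ fun hyU ↦ hUY hyU hy]
        exact huF y hy
    have hle := hu_le hmem x
    rw [piecewise_eq_of_mem _ _ _ hx] at hle
    have hfx : -a - b * dist x z ≤ u x := le_sup_right.trans hle
    linarith
  · have hux : -u x - a ≤ b * dist x z := by
      refine hX.le_mul_dist_of_forall_mem_frontier hx hz fun p hp ↦ ?_
      have hpx := hLip.le_add_mul p x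
      rw [dist_comm] at hpx
      calc -u x - a ≤ K * dist x p + b * dist p z := by linarith [h p hp]
        _ ≤ b * dist x p + b * dist p z := by gcongr
        _ = b * (dist x p + dist p z) := by ring
    linarith

end Perron

section AMExtension

variable {X : Type*} [MetricSpace X] {F u v : X → ℝ} {Y : Set X} {K : ℝ≥0} {M : ℝ}

theorem exists_isAMExtension (hX : IsLengthSpace X) (hY : Y.Nonempty)
    (hF : LipschitzOnWith K F Y) : ∃ u, IsAMExtension Y F u := by
  obtain ⟨u, hu⟩ := exists_isGreatest_perronClass hX hY hF
  exact ⟨u, (isAMExtension_iff hX).2 ⟨⟨K, hu.1.1⟩, eqOn_of_isGreatest_perronClass hX hF hu,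
    hu.1.2.2, isCCAOn_neg_of_isGreatest_perronClass hX hu⟩⟩

theorem IsAMExtension.le (hX : IsLengthSpace X) (hY : Y.Nonempty) (hF : ∀ y ∈ Y, |F y| ≤ M)
    (hu : IsAMExtension Y F u) (hv : IsAMExtension Y F v) : u ≤ v := by
  obtain ⟨⟨K, hK⟩, huF, hu_cca, -⟩ := (isAMExtension_iff hX).1 hu
  obtain ⟨⟨L, hL⟩, hvF, -, hv_cca⟩ := (isAMExtension_iff hX).1 hv
  have hub : BddAbove (u '' Yᶜᶜ) := by
    rw [compl_compl]
    exact ⟨M, forall_mem_image.2 fun y hy ↦ huF hy ▸ (abs_le.1 (hF y hy)).2⟩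
  have hvb : BddAbove ((-v) '' Yᶜᶜ) := by
    rw [compl_compl]
    exact ⟨M, forall_mem_image.2 fun y hy ↦ neg_le.1 (hvF hy ▸ (abs_le.1 (hF y hy)).1)⟩
  have huv (y : X) (hy : y ∉ Yᶜ) : u y + (-v) y ≤ 0 := by
    rw [notMem_compl_iff] at hy
    rw [Pi.neg_apply, huF hy, hvF hy, add_neg_cancel]
  intro x
  have hle := hu_cca.add_nonpos hX (by rwa [compl_compl]) hv_cca hK.uniformContinuous
    hL.uniformContinuous.neg hub hvb huv x
  simp only [Pi.neg_apply] at hle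
  linarith

end AMExtension

/-- Every bounded Lipschitz function `F` on a nonempty subset `Y` of a length space `X`
admits a unique absolutely minimal extension to `X`. -/
theorem stmt0 {X : Type*} [MetricSpace X] (hX : IsLengthSpace X)
    (Y : Set X) (hY : Y.Nonempty) (F : X → ℝ)
    (hFlip : ∃ K : NNReal, LipschitzOnWith K F Y)
    (hFbdd : ∃ M : ℝ, ∀ y ∈ Y, |F y| ≤ M) :
    ∃! u : X → ℝ, IsAMExtension Y F u := by
  obtain ⟨K, hK⟩ := hFlip
  obtain ⟨M, hM⟩ := hFbdd
  obtain ⟨u, hu⟩ := exists_isAMExtension hX hY hK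
  exact ⟨u, hu, fun v hv ↦ (hv.le hX hY hM hu).antisymm (hu.le hX hY hM hv)⟩

end
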